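/- arXiv:2003.06501 — 4 statements merged into one kernel-verified Lean document; each statement's English description precedes it below -/
import Mathlib

section
/- Let a, b, c, d, u be real with u ≠ 2a and u ≠ 2b, and let V(x,y) = (x²+y²)³ − 3a x⁴ − 3u x²y² − 3b y⁴ + 3c x² + 3d y². Suppose (X,Y) with X ≠ 0 and Y ≠ 0 is a stationary point of V, and set R² = X² + Y². Then X² = (R⁴ − uR² + c)/(2a − u), Y² = (R⁴ − uR² + d)/(2b − u), and R² satisfies the quadratic equation z(u)·(R²)² − (u·z(u) + 1)·R² + w(u) = 0, where z(u) = 1/(2a−u) + 1/(2b−u) and w(u) = c/(2a−u) + d/(2b−u). -/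
/-!
Each partial derivative of `V` at `(X, Y)` factors through its variable: with `R² = X² + Y²`,
`∂V/∂x = 6X (R⁴ - 2a X² - u Y² + c)` and `∂V/∂y = 6Y (R⁴ - 2b Y² - u X² + d)`. Off the axes the
second factors vanish, and replacing `Y²` by `R² - X²` in the first (and symmetrically in the
other) gives `(2a - u) X² = R⁴ - u R² + c` and `(2b - u) Y² = R⁴ - u R² + d`. Solving for `X²`
and `Y²` and adding yields the quadratic equation for `R²`.
-/

/-- Both restrictions of the potential to a line parallel to a coordinate axis have this form,
with `k` the square of the frozen coordinate. -/
lemma hasDerivAt_butterfly_slice (k p q r t : ℝ) :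
    HasDerivAt (fun s : ℝ => (s^2 + k)^3 - 3*p*s^4 + 3*q*s^2 + r)
      (6*t*((t^2 + k)^2 - 2*p*t^2 + q)) t := by
  have h := ((((((hasDerivAt_id t).pow 2).add_const k).pow 3).sub
    (((hasDerivAt_id t).pow 4).const_mul (3*p))).add
    (((hasDerivAt_id t).pow 2).const_mul (3*q))).add_const r
  refine h.congr_deriv ?_
  simp
  ring


/-- Off-axis stationary points of the 2D butterfly potential: if `u ≠ 2a`, `u ≠ 2b`
and `(X,Y)` with `X ≠ 0 ≠ Y` is a stationary point of
`V(x,y) = (x²+y²)³ − 3a x⁴ − 3u x²y² − 3b y⁴ + 3c x² + 3d y²`, then with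
`R² = X² + Y²` one has `X² = (R⁴ − uR² + c)/(2a−u)`, `Y² = (R⁴ − uR² + d)/(2b−u)`,
and `R²` satisfies `z(u)(R²)² − (u z(u) + 1) R² + w(u) = 0` where
`z(u) = 1/(2a−u) + 1/(2b−u)` and `w(u) = c/(2a−u) + d/(2b−u)`. -/
theorem butterfly2d_offaxis_stationary (a b c d u : ℝ) (hua : u ≠ 2*a) (hub : u ≠ 2*b)
    (V : ℝ → ℝ → ℝ)
    (hV : ∀ x y : ℝ,
      V x y = (x^2 + y^2)^3 - 3*a*x^4 - 3*u*x^2*y^2 - 3*b*y^4 + 3*c*x^2 + 3*d*y^2)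
    (X Y : ℝ) (hX : X ≠ 0) (hY : Y ≠ 0)
    (hstat : deriv (fun x => V x Y) X = 0 ∧ deriv (fun y => V X y) Y = 0) :
    let R2 := X^2 + Y^2
    let z := 1/(2*a - u) + 1/(2*b - u)
    let w := c/(2*a - u) + d/(2*b - u)
    X^2 = (R2^2 - u*R2 + c)/(2*a - u) ∧
    Y^2 = (R2^2 - u*R2 + d)/(2*b - u) ∧
    z * R2^2 - (u*z + 1) * R2 + w = 0 := by
  obtain ⟨hx, hy⟩ := hstat
  have hxs : (fun x => V x Y) = fun x : ℝ =>
      (x^2 + Y^2)^3 - 3*a*x^4 + 3*(c - u*Y^2)*x^2 + (3*d*Y^2 - 3*b*Y^4) := by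
    funext x
    rw [hV]
    ring
  have hys : (fun y => V X y) = fun y : ℝ =>
      (y^2 + X^2)^3 - 3*b*y^4 + 3*(d - u*X^2)*y^2 + (3*c*X^2 - 3*a*X^4) := by
    funext y
    rw [hV]
    ring
  rw [hxs, (hasDerivAt_butterfly_slice _ _ _ _ X).deriv] at hx
  rw [hys, (hasDerivAt_butterfly_slice _ _ _ _ Y).deriv] at hy
  have hx' := (mul_eq_zero.mp hx).resolve_left (mul_ne_zero (by norm_num) hX)
  have hy' := (mul_eq_zero.mp hy).resolve_left (mul_ne_zero (by norm_num) hY)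
  have ha : 2*a - u ≠ 0 := sub_ne_zero.mpr hua.symm
  have hb : 2*b - u ≠ 0 := sub_ne_zero.mpr hub.symm
  intro R2 z w
  have h1 : X^2 = (R2^2 - u*R2 + c)/(2*a - u) := by
    rw [eq_div_iff ha]
    simp only [R2]
    linear_combination -hx'
  have h2 : Y^2 = (R2^2 - u*R2 + d)/(2*b - u) := by
    rw [eq_div_iff hb]
    simp only [R2]
    linear_combination -hy'
  refine ⟨h1, h2, ?_⟩
  have hR : R2 = (R2^2 - u*R2 + c)/(2*a - u) + (R2^2 - u*R2 + d)/(2*b - u) := by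
    rw [← h1, ← h2]
  simp only [z, w]
  linear_combination -hR
end

section
/- (Lemma 1) Let α > 0 and β > 0, and set D = β⁴ − 8α²(α² + 2β²). Then the two numbers R²± = (1/3)·(α² + β² ± √D) are both real and positive (i.e. D ≥ 0 and both values are > 0) if and only if the ratio ξ = α/β satisfies ξ²(2 + ξ²) ≤ 1/8, which in turn holds if and only if ξ ≤ (1/2)·√(3√2 − 4). -/
/-!
Substituting `α = ξβ` gives `D = β⁴(1 − 8ξ²(2 + ξ²))`, so `D ≥ 0` is exactly the condition on `ξ`.
Positivity of both numbers is then automatic: `(α² + β²)² − D = 9α²(α² + 2β²) > 0`, so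
`√D < α² + β²`. For the second equivalence, complete the square:
`ξ²(2 + ξ²) ≤ 1/8` says `(ξ² + 1)² ≤ 9/8 = (3√2/4)²`, i.e. `4ξ² ≤ 3√2 − 4`.
-/

/-- Lemma 1 of the paper: for `α, β > 0` and `D = β⁴ − 8α²(α² + 2β²)`, the two
numbers `R²± = (α² + β² ± √D)/3` are both real and positive (i.e. `D ≥ 0` and both
are `> 0`) if and only if `ξ = α/β` satisfies `ξ²(2 + ξ²) ≤ 1/8`, which holds if
and only if `ξ ≤ (1/2)√(3√2 − 4)`. -/
theorem butterfly_isotropic_reality_lemma1 (α β : ℝ) (hα : α > 0) (hβ : β > 0) :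
    let D := β^4 - 8*α^2*(α^2 + 2*β^2)
    let ξ := α / β
    ((D ≥ 0 ∧ (α^2 + β^2 + Real.sqrt D)/3 > 0 ∧ (α^2 + β^2 - Real.sqrt D)/3 > 0) ↔
      ξ^2 * (2 + ξ^2) ≤ 1/8) ∧
    (ξ^2 * (2 + ξ^2) ≤ 1/8 ↔ ξ ≤ (1/2) * Real.sqrt (3*Real.sqrt 2 - 4)) := by
  intro D ξ
  have hξ : 0 < ξ := div_pos hα hβ
  have hD : D = β^4 * (1 - 8 * (ξ^2 * (2 + ξ^2))) := by
    simp only [D, ξ]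
    field_simp
    ring
  have hD_iff : D ≥ 0 ↔ ξ^2 * (2 + ξ^2) ≤ 1/8 := by
    rw [hD, ge_iff_le, mul_nonneg_iff_of_pos_left (by positivity)]
    constructor <;> intro h <;> linarith
  have hsqrt : Real.sqrt D < α^2 + β^2 := by
    rw [Real.sqrt_lt' (by positivity)]
    have : 0 < 9 * α^2 * (α^2 + 2 * β^2) := by positivity
    simp only [D]
    linarith
  have hsqrt_nonneg : 0 ≤ Real.sqrt D := Real.sqrt_nonneg D
  refine ⟨⟨fun h => hD_iff.1 h.1, fun h => ⟨hD_iff.2 h, by positivity, by linarith⟩⟩, ?_⟩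
  have h2 : Real.sqrt 2 ^ 2 = 2 := Real.sq_sqrt (by norm_num)
  calc ξ^2 * (2 + ξ^2) ≤ 1/8 ↔ (ξ^2 + 1)^2 ≤ (3 * Real.sqrt 2 / 4)^2 := by
        have h9 : (3 * Real.sqrt 2 / 4)^2 = 9/8 := by
          rw [div_pow, mul_pow, h2]
          norm_num
        rw [h9]
        constructor <;> intro h <;> linarith
    _ ↔ ξ^2 + 1 ≤ 3 * Real.sqrt 2 / 4 := sq_le_sq₀ (by positivity) (by positivity)
    _ ↔ (2 * ξ)^2 ≤ 3 * Real.sqrt 2 - 4 := by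
        constructor <;> intro h <;> linarith
    _ ↔ 2 * ξ ≤ Real.sqrt (3 * Real.sqrt 2 - 4) := (Real.le_sqrt' (by positivity)).symm
    _ ↔ ξ ≤ (1/2) * Real.sqrt (3 * Real.sqrt 2 - 4) := by
        constructor <;> intro h <;> linarith
end

section
/- Let αₓ > 0, βₓ > 0, set a = αₓ² + βₓ², p = αₓ²(αₓ² + 2βₓ²) and γₓ² = αₓ² + 2βₓ², and let V be the three-dimensional butterfly potential with these values of a and p and arbitrary real b, c, u, v, w, q, s. Then the points (±αₓ, 0, 0) and (±γₓ, 0, 0) are stationary points of V (all three partial derivatives vanish there), and the values of the potential there are V(±αₓ,0,0) = αₓ⁴(αₓ² + 3βₓ²) and V(±γₓ,0,0) = (αₓ² − βₓ²)·γₓ⁴. -/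
/-!
On the `x`-axis, `V(x,0,0) = x⁶ - 3ax⁴ + 3px²`. The choice of parameters gives `2a = αₓ² + γₓ²` and
`p = αₓ²γₓ²`, so the derivative factors as `6x(x² - αₓ²)(x² - γₓ²)`, which vanishes at `±αₓ`
and `±γₓ`. Since `V` is even in `y` and in `z`, the other two partial derivatives vanish everywhere
on the axis. The restriction of `V` to a line of any of the three kinds is an even polynomial of
degree six, so a single derivative computation, `hasDerivAt_even_sextic`, serves all of them.
-/

theorem hasDerivAt_even_sextic (B C D X : ℝ) :
    HasDerivAt (fun x : ℝ => x^6 + B*x^4 + C*x^2 + D) (6*X^5 + 4*B*X^3 + 2*C*X) X := by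
  have h := ((((hasDerivAt_pow 6 X).add ((hasDerivAt_pow 4 X).const_mul B)).add
    ((hasDerivAt_pow 2 X).const_mul C)).add_const D)
  refine h.congr_deriv ?_
  push_cast
  ring

/-- For `αₓ, βₓ > 0`, with `a = αₓ² + βₓ²`, `p = αₓ²(αₓ² + 2βₓ²)` and
`γₓ² = αₓ² + 2βₓ²`, the points `(±αₓ,0,0)` and `(±γₓ,0,0)` are stationary points of
the 3D butterfly potential, with `V(±αₓ,0,0) = αₓ⁴(αₓ² + 3βₓ²)` and
`V(±γₓ,0,0) = (αₓ² − βₓ²)γₓ⁴`. -/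
theorem butterfly3d_axis_stationary_points (αx βx b c u v w q s : ℝ)
    (hαx : αx > 0) (hβx : βx > 0)
    (a p γx : ℝ) (ha : a = αx^2 + βx^2) (hp : p = αx^2 * (αx^2 + 2*βx^2))
    (hγx : γx = Real.sqrt (αx^2 + 2*βx^2))
    (V : ℝ → ℝ → ℝ → ℝ)
    (hV : ∀ x y z : ℝ,
      V x y z = (x^2 + y^2 + z^2)^3 - 3*a*x^4 - 3*b*y^4 - 3*c*z^4
        - 3*u*x^2*y^2 - 3*v*x^2*z^2 - 3*w*y^2*z^2 + 3*p*x^2 + 3*q*y^2 + 3*s*z^2) :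
    (∀ X : ℝ, (X = αx ∨ X = -αx ∨ X = γx ∨ X = -γx) →
      deriv (fun x => V x 0 0) X = 0 ∧
      deriv (fun y => V X y 0) 0 = 0 ∧
      deriv (fun z => V X 0 z) 0 = 0) ∧
    V αx 0 0 = αx^4 * (αx^2 + 3*βx^2) ∧
    V (-αx) 0 0 = αx^4 * (αx^2 + 3*βx^2) ∧
    V γx 0 0 = (αx^2 - βx^2) * γx^4 ∧
    V (-γx) 0 0 = (αx^2 - βx^2) * γx^4 := by
  have hγ : γx^2 = αx^2 + 2*βx^2 := by
    rw [hγx, Real.sq_sqrt (by positivity)]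
  refine ⟨fun X hX => ⟨?_, ?_, ?_⟩, ?_, ?_, ?_, ?_⟩
  · have hroot : (X^2 - αx^2) * (X^2 - γx^2) = 0 := by
      rcases hX with rfl | rfl | rfl | rfl <;> ring
    have hf : (fun x => V x 0 0) = fun x => x^6 + (-3*a)*x^4 + (3*p)*x^2 + 0 := by
      funext x; rw [hV]; ring
    rw [hf, (hasDerivAt_even_sextic _ _ _ X).deriv, ha, hp]
    rw [hγ] at hroot
    linear_combination 6 * X * hroot
  · have hf : (fun y => V X y 0) = fun y => y^6 + (3*X^2 - 3*b)*y^4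
        + (3*X^4 - 3*u*X^2 + 3*q)*y^2 + (X^6 - 3*a*X^4 + 3*p*X^2) := by
      funext y; rw [hV]; ring
    rw [hf, (hasDerivAt_even_sextic _ _ _ 0).deriv]
    ring
  · have hf : (fun z => V X 0 z) = fun z => z^6 + (3*X^2 - 3*c)*z^4
        + (3*X^4 - 3*v*X^2 + 3*s)*z^2 + (X^6 - 3*a*X^4 + 3*p*X^2) := by
      funext z; rw [hV]; ring
    rw [hf, (hasDerivAt_even_sextic _ _ _ 0).deriv]
    ring
  · rw [hV, ha, hp]; ring
  · rw [hV, ha, hp]; ring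
  -- In terms of `γx` and `αx`, the value is `γx⁴(γx² - 3a + 3αx²)`.
  · rw [hV, ha, hp, ← hγ]
    linear_combination γx^4 * hγ
  · rw [hV, ha, hp, ← hγ]
    linear_combination γx^4 * hγ
end

section
/- Let a ≠ 0, b ≠ 0, c ≠ 0 and p, q, s be real, and let V be the three-dimensional butterfly potential with vanishing cross-couplings u = v = w = 0. If (X,Y,Z) with X ≠ 0, Y ≠ 0, Z ≠ 0 is a stationary point of V, then R² = X² + Y² + Z² satisfies the quadratic equation (ab + ac + bc)·(R²)² − 2abc·R² + (s·ab + q·ac + p·bc) = 0. -/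
/-!
In each coordinate the potential is `(t² + k)³ - 3αt⁴ + 3πt² + m` with `k`, `m` constant, and its
derivative `6t((t² + k)² - 2αt² + π)` vanishes at a nonzero `t` only if the second factor does.
A bulk stationary point therefore satisfies `R⁴ - 2aX² + p = 0`, `R⁴ - 2bY² + q = 0` and
`R⁴ - 2cZ² + s = 0`. Weighting these by `bc`, `ac`, `ab` and adding turns the terms in
`X²`, `Y²`, `Z²` into `-2abc R²`, which gives the quadratic.
-/

/-- The one-variable stationarity condition at a nonzero point, common to all three coordinates. -/
theorem axis_stationary {f : ℝ → ℝ} {α π k m t : ℝ} (ht : t ≠ 0)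
    (hf : ∀ x, f x = (x^2 + k)^3 - 3*α*x^4 + 3*π*x^2 + m) (hd : deriv f t = 0) :
    (t^2 + k)^2 - 2*α*t^2 + π = 0 := by
  have h : HasDerivAt f (6*t*((t^2 + k)^2 - 2*α*t^2 + π)) t := by
    rw [funext hf]
    have h2 := hasDerivAt_pow 2 t
    have h4 := hasDerivAt_pow 4 t
    refine (((((h2.add_const k).pow 3).sub (h4.const_mul (3*α))).add
      (h2.const_mul (3*π))).add_const m).congr_deriv ?_
    push_cast
    ring
  rw [h.deriv] at hd
  exact (mul_eq_zero.mp hd).resolve_left (mul_ne_zero (by norm_num) ht)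

/-- For `a, b, c ≠ 0` and vanishing cross-couplings `u = v = w = 0`, any bulk
stationary point `(X,Y,Z)` (all coordinates nonzero) of the 3D butterfly potential
has its squared radius `R² = X² + Y² + Z²` satisfying
`(ab + ac + bc)(R²)² − 2abc R² + (s·ab + q·ac + p·bc) = 0`. -/
theorem butterfly3d_diagonal_radius_quadratic (a b c p q s : ℝ)
    (ha : a ≠ 0) (hb : b ≠ 0) (hc : c ≠ 0)
    (V : ℝ → ℝ → ℝ → ℝ)
    (hV : ∀ x y z : ℝ,
      V x y z = (x^2 + y^2 + z^2)^3 - 3*a*x^4 - 3*b*y^4 - 3*c*z^4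
        + 3*p*x^2 + 3*q*y^2 + 3*s*z^2)
    (X Y Z : ℝ) (hX : X ≠ 0) (hY : Y ≠ 0) (hZ : Z ≠ 0)
    (hstat : deriv (fun x => V x Y Z) X = 0 ∧ deriv (fun y => V X y Z) Y = 0 ∧
      deriv (fun z => V X Y z) Z = 0) :
    let R2 := X^2 + Y^2 + Z^2
    (a*b + a*c + b*c) * R2^2 - 2*a*b*c * R2 + (s*a*b + q*a*c + p*b*c) = 0 := by
  obtain ⟨hx, hy, hz⟩ := hstat
  have ex := axis_stationary (α := a) (π := p) (k := Y^2 + Z^2)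
    (m := -3*b*Y^4 - 3*c*Z^4 + 3*q*Y^2 + 3*s*Z^2) hX (fun x => by rw [hV]; ring) hx
  have ey := axis_stationary (α := b) (π := q) (k := X^2 + Z^2)
    (m := -3*a*X^4 - 3*c*Z^4 + 3*p*X^2 + 3*s*Z^2) hY (fun y => by rw [hV]; ring) hy
  have ez := axis_stationary (α := c) (π := s) (k := X^2 + Y^2)
    (m := -3*a*X^4 - 3*b*Y^4 + 3*p*X^2 + 3*q*Y^2) hZ (fun z => by rw [hV]; ring) hz
  intro R2
  simp only [R2]
  linear_combination b*c*ex + a*c*ey + a*b*ez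
end
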